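/- Let n ≥ 2, let p, r ∈ [1,∞) and s ∈ (0,1) satisfy 0 ≤ 1/r − 1/p < s/n. Then there is a constant c > 0 (depending on n, p, r, s but not on Q or u) such that for every cube Q ⊆ ℝⁿ and every u ∈ L^r(Q), ∫_Q |u(x) − u_Q|^p dx ≤ c |Q|^{1 + ps/n − p/r} (∫_Q ∫_Q |u(x)−u(y)|^r / |x−y|^{n+sr} dy dx)^{p/r}, as an inequality in [0,∞], where u_Q := ⨍_Q u and |·| is the Euclidean norm. -/

import Mathlib

open MeasureTheory Metric Set Filter
open scoped ENNReal NNReal Topology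

noncomputable section

/-- ℝⁿ, with the sup-norm (given by the product metric on `Fin n → ℝ`). -/
abbrev Rn (n : ℕ) := Fin n → ℝ

/-- The Euclidean distance on `Rn n`. -/
def euclDist {n : ℕ} (x y : Rn n) : ℝ := Real.sqrt (∑ i, (x i - y i) ^ 2)

/-! For almost every `x`, the averages of `u` over the balls `B(x, D 2⁻ʲ)` lead from the average
over the whole space (`j = 0`) to `u x`, so `‖u x - ⨍ u‖` is at most the sum of the increments. By
Jensen's inequality the `j`-th increment is at most a multiple of `t ^ (s - ν / r) F(x) ^ (1 / r)`,
where `t = D 2⁻ʲ` and `F(x)` is the integral over `B(x, t)` of the inner integral of the Gagliardo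
energy `I`. As `p ≥ r`, `F ^ (p / r) ≤ I ^ (p / r - 1) F`, and `∫ F ≲ t ^ ν I` by Tonelli, so the
increments have `L^p` norm at most a multiple of `t ^ δ I ^ (1 / r)` with
`δ = s - ν (1 / r - 1 / p) > 0`. By Minkowski's inequality it remains to sum a geometric series.
Only the two-sided bounds `μ(B(x, t)) ≈ t ^ ν` enter, and a cube inherits these from `ℝⁿ`, with
`ν = n`. -/

section Preliminaries

variable {α : Type*} [MeasurableSpace α] {μ : Measure α}

lemma rpow_neg_le_mul_rpow_neg {d d' K : ℝ≥0∞} {e : ℝ} (h : d' ≤ K * d) (hK₀ : K ≠ 0)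
    (hK : K ≠ ∞) (he : 0 ≤ e) : d ^ (-e) ≤ K ^ e * d' ^ (-e) := by
  have hKe₀ : K ^ e ≠ 0 := by simp [ENNReal.rpow_eq_zero_iff, hK₀, hK]
  have hKe : K ^ e ≠ ∞ := ENNReal.rpow_ne_top_of_nonneg he hK
  simp only [ENNReal.rpow_neg]
  calc (d ^ e)⁻¹ = K ^ e * ((K * d) ^ e)⁻¹ := by
        rw [ENNReal.mul_rpow_of_nonneg _ _ he, ENNReal.mul_inv (.inl hKe₀) (.inl hKe), ← mul_assoc,
          ENNReal.mul_inv_cancel hKe₀ hKe, one_mul]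
    _ ≤ K ^ e * (d' ^ e)⁻¹ := by gcongr

lemma inv_mul_half_rpow_mul {a t : ℝ≥0∞} (ha : a ≠ 0) (ht₀ : t ≠ 0) (ht : t ≠ ∞) (ν e : ℝ) :
    (a * (t * 2⁻¹) ^ ν)⁻¹ * (a⁻¹ * 2 ^ (ν + e) * t ^ e) =
      a⁻¹ ^ 2 * 2 ^ (2 * ν + e) * t ^ (e - ν) := by
  have hhalf₀ : (t * 2⁻¹) ^ ν ≠ 0 := by
    simp [ENNReal.rpow_eq_zero_iff, ENNReal.mul_eq_top, ht₀, ht]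
  rw [ENNReal.mul_inv (.inl ha) (.inr hhalf₀), ← ENNReal.rpow_neg,
    ENNReal.mul_rpow_of_ne_top ht (by simp), ENNReal.inv_rpow, ← ENNReal.rpow_neg, neg_neg,
    two_mul, add_assoc, sub_eq_neg_add,
    ENNReal.rpow_add ν (ν + e) two_ne_zero ENNReal.ofNat_ne_top, ENNReal.rpow_add _ _ ht₀ ht]
  ring

lemma mul_inv_two_pow_ne_zero {D : ℝ≥0∞} (hD₀ : D ≠ 0) (j : ℕ) : D * 2⁻¹ ^ j ≠ 0 :=
  mul_ne_zero hD₀ (pow_ne_zero _ (by simp))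

lemma mul_inv_two_pow_le (D : ℝ≥0∞) (j : ℕ) : D * 2⁻¹ ^ j ≤ D :=
  mul_le_of_le_one_right' (pow_le_one' (by simp) j)

lemma tendsto_mul_inv_two_pow {D : ℝ≥0∞} (hD : D ≠ ∞) :
    Tendsto (fun j : ℕ => D * 2⁻¹ ^ j) atTop (𝓝 0) := by
  simpa using ENNReal.Tendsto.const_mul
    (ENNReal.tendsto_pow_atTop_nhds_zero_of_lt_one (by simp)) (.inr hD)

lemma tsum_mul_inv_two_pow_rpow (D : ℝ≥0∞) {δ : ℝ} (hδ : 0 ≤ δ) :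
    ∑' j : ℕ, (D * 2⁻¹ ^ j) ^ δ = D ^ δ * (1 - 2⁻¹ ^ δ)⁻¹ := by
  rw [← ENNReal.tsum_geometric, ← ENNReal.tsum_mul_left]
  refine tsum_congr fun j => ?_
  rw [ENNReal.mul_rpow_of_nonneg _ _ hδ, ← ENNReal.rpow_natCast, ← ENNReal.rpow_natCast,
    ← ENNReal.rpow_mul, ← ENNReal.rpow_mul, mul_comm δ]

lemma pos_of_sub_mul_inv_sub_inv_pos {ν s r p : ℝ} (hν : 0 ≤ ν) (hr : 0 < r) (hrp : r ≤ p)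
    (hδ : 0 < s - ν * (r⁻¹ - p⁻¹)) : 0 < s := by
  have : 0 ≤ ν * (r⁻¹ - p⁻¹) := mul_nonneg hν (sub_nonneg.2 (by gcongr))
  linarith

lemma inv_one_sub_inv_two_rpow_ne_top {δ : ℝ} (hδ : 0 < δ) :
    (1 - (2⁻¹ : ℝ≥0∞) ^ δ)⁻¹ ≠ ∞ := by
  have : (2⁻¹ : ℝ≥0∞) ^ δ < 1 := ENNReal.rpow_lt_one (by simp) hδ
  simpa only [ne_eq, ENNReal.inv_eq_top, tsub_eq_zero_iff_le, not_le] using this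

lemma lintegral_Lp_sum_le {ι : Type*} {s : Finset ι} {f : ι → α → ℝ≥0∞}
    (hf : ∀ i ∈ s, AEMeasurable (f i) μ) {p : ℝ} (hp : 1 ≤ p) :
    (∫⁻ x, (∑ i ∈ s, f i x) ^ p ∂μ) ^ p⁻¹ ≤ ∑ i ∈ s, (∫⁻ x, f i x ^ p ∂μ) ^ p⁻¹ := by
  simpa only [eLpNorm', enorm_eq_self, one_div, Finset.sum_apply] using
    eLpNorm'_sum_le (fun i hi => (hf i hi).aestronglyMeasurable) hp

lemma lintegral_Lp_tsum_le {f : ℕ → α → ℝ≥0∞} (hf : ∀ j, AEMeasurable (f j) μ) {p : ℝ}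
    (hp : 1 ≤ p) :
    (∫⁻ x, (∑' j, f j x) ^ p ∂μ) ^ p⁻¹ ≤ ∑' j, (∫⁻ x, f j x ^ p ∂μ) ^ p⁻¹ := by
  have hlim : Tendsto (fun N => ∫⁻ x, (∑ j ∈ Finset.range N, f j x) ^ p ∂μ) atTop
      (𝓝 (∫⁻ x, (∑' j, f j x) ^ p ∂μ)) :=
    lintegral_tendsto_of_tendsto_of_monotone
      (fun N => (Finset.aemeasurable_fun_sum _ fun j _ => hf j).pow_const p)
      (.of_forall fun x N M h => by dsimp only; gcongr)
      (.of_forall fun x => (ENNReal.tendsto_nat_tsum fun j => f j x).ennrpow_const p)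
  exact le_of_tendsto' (hlim.ennrpow_const p⁻¹) fun N =>
    (lintegral_Lp_sum_le (fun j _ => hf j) hp).trans (ENNReal.sum_le_tsum _)

variable {E : Type*} [NormedAddCommGroup E] [NormedSpace ℝ E] [CompleteSpace E] {u : α → E}

lemma enorm_sub_average_rpow_le_laverage [IsFiniteMeasure μ] [NeZero μ] (hu : Integrable u μ)
    (c : E) {r : ℝ} (hr : 1 ≤ r) :
    ‖c - ⨍ y, u y ∂μ‖ₑ ^ r ≤ ⨍⁻ y, ‖c - u y‖ₑ ^ r ∂μ := by
  have hr₀ : 0 < r := by linarith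
  have hu' : Integrable u ((μ univ)⁻¹ • μ) := hu.to_average
  have hc : c - ⨍ y, u y ∂μ = ∫ y, (c - u y) ∂(μ univ)⁻¹ • μ := by
    rw [integral_sub (integrable_const c) hu', integral_const, probReal_univ, one_smul,
      average_eq']
  have hL1 : ‖c - ⨍ y, u y ∂μ‖ₑ ≤ (⨍⁻ y, ‖c - u y‖ₑ ^ r ∂μ) ^ r⁻¹ := by
    rw [hc]
    refine (enorm_integral_le_lintegral_enorm _).trans ?_
    simpa [eLpNorm', laverage_eq'] using eLpNorm'_le_eLpNorm'_of_exponent_le zero_lt_one hr _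
      ((integrable_const c).sub hu').aestronglyMeasurable
  exact (ENNReal.le_rpow_inv_iff hr₀).1 hL1

lemma enorm_sub_setAverage_rpow_le [IsFiniteMeasure μ] (hu : Integrable u μ) (c : E) {r : ℝ}
    (hr : 1 ≤ r) {B : Set α} {m : ℝ≥0∞} (hm₀ : m ≠ 0) (hm : m ≤ μ B) :
    ‖c - ⨍ y in B, u y ∂μ‖ₑ ^ r ≤ m⁻¹ * ∫⁻ y in B, ‖c - u y‖ₑ ^ r ∂μ := by
  have hB : μ B ≠ 0 := (hm₀.bot_lt.trans_le hm).ne'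
  have : NeZero (μ.restrict B) := ⟨by rwa [ne_eq, Measure.restrict_eq_zero]⟩
  refine (enorm_sub_average_rpow_le_laverage hu.restrict c hr).trans ?_
  rw [setLAverage_eq, ENNReal.div_eq_inv_mul]
  gcongr

end Preliminaries

section Metric

variable {X : Type*} [PseudoEMetricSpace X] [MeasurableSpace X] [OpensMeasurableSpace X]

lemma measurableSet_closedEBall (x : X) (t : ℝ≥0∞) : MeasurableSet (closedEBall x t) :=
  isClosed_closedEBall.measurableSet

variable [SecondCountableTopology X] {μ : Measure X}

lemma aemeasurable_indicator_closedEBall [SFinite μ] {f : X → ℝ≥0∞} (hf : AEMeasurable f μ)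
    (t : ℝ≥0∞) :
    AEMeasurable (Function.uncurry fun x => (closedEBall x t).indicator f) (μ.prod μ) :=
  hf.comp_snd.indicator (s := {q : X × X | edist q.2 q.1 ≤ t})
    (measurableSet_le (by fun_prop) measurable_const)

lemma aemeasurable_setLIntegral_closedEBall [SFinite μ] {f : X → ℝ≥0∞} (hf : AEMeasurable f μ)
    (t : ℝ≥0∞) : AEMeasurable (fun x => ∫⁻ y in closedEBall x t, f y ∂μ) μ := by
  simp only [← lintegral_indicator (measurableSet_closedEBall _ t)]
  exact (aemeasurable_indicator_closedEBall hf t).lintegral_prod_right'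

lemma lintegral_setLIntegral_closedEBall [SFinite μ] {f : X → ℝ≥0∞} (hf : AEMeasurable f μ)
    (t : ℝ≥0∞) :
    ∫⁻ x, ∫⁻ y in closedEBall x t, f y ∂μ ∂μ = ∫⁻ y, f y * μ (closedEBall y t) ∂μ := by
  simp only [← lintegral_indicator (measurableSet_closedEBall _ t)]
  rw [lintegral_lintegral_swap (aemeasurable_indicator_closedEBall hf t)]
  refine lintegral_congr fun y => ?_
  rw [← setLIntegral_const, ← lintegral_indicator (measurableSet_closedEBall y t)]
  simp only [indicator, mem_closedEBall, edist_comm]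

lemma lintegral_setLIntegral_closedEBall_rpow_le [SFinite μ] {f : X → ℝ≥0∞}
    (hf : AEMeasurable f μ) {q : ℝ} (hq : 1 ≤ q) {t m : ℝ≥0∞}
    (hm : ∀ᵐ y ∂μ, μ (closedEBall y t) ≤ m) :
    ∫⁻ x, (∫⁻ y in closedEBall x t, f y ∂μ) ^ q ∂μ ≤ m * (∫⁻ y, f y ∂μ) ^ q := by
  have hq₀ : 0 ≤ q - 1 := by linarith
  have rpow_split (A : ℝ≥0∞) : A ^ q = A ^ (q - 1) * A := by
    simpa using ENNReal.rpow_add_of_nonneg (x := A) _ _ hq₀ zero_le_one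
  set I := ∫⁻ y, f y ∂μ
  calc ∫⁻ x, (∫⁻ y in closedEBall x t, f y ∂μ) ^ q ∂μ
      ≤ ∫⁻ x, I ^ (q - 1) * ∫⁻ y in closedEBall x t, f y ∂μ ∂μ := by
        refine lintegral_mono fun x => ?_
        rw [rpow_split]
        gcongr
        exact setLIntegral_le_lintegral _ _
    _ = I ^ (q - 1) * ∫⁻ y, f y * μ (closedEBall y t) ∂μ := by
        rw [lintegral_const_mul'' _ (aemeasurable_setLIntegral_closedEBall hf t),
          lintegral_setLIntegral_closedEBall hf]
    _ ≤ I ^ (q - 1) * ∫⁻ y, f y * m ∂μ := by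
        gcongr I ^ (q - 1) * ?_
        exact lintegral_mono_ae (hm.mono fun y hy => by gcongr)
    _ = m * I ^ q := by
        rw [lintegral_mul_const'' _ hf, rpow_split]
        ring

end Metric

section FractionalSobolev

variable {X : Type*} [PseudoEMetricSpace X] [MeasurableSpace X] {μ : Measure X}
  {E : Type*} [NormedAddCommGroup E] {u : X → E} {ν s r p : ℝ} {a b D t : ℝ≥0∞} {x y : X}

/-- The inner integral `∫ ‖u x - u y‖ ^ r / d(x, y) ^ (ν + s r) dμ(y)` of the `r`-th power of the
Gagliardo seminorm of order `s` in dimension `ν`. Where `d(x, y) = 0` the kernel is `∞`, so that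
there the integrand vanishes or is `∞` according to whether `u x = u y`. -/
def gagliardoDensity (μ : Measure X) (ν s r : ℝ) (u : X → E) (x : X) : ℝ≥0∞ :=
  ∫⁻ y, ‖u x - u y‖ₑ ^ r * edist x y ^ (-(ν + s * r)) ∂μ

/-- The `r`-th power of the Gagliardo seminorm of order `s` in dimension `ν`. -/
def gagliardoEnergy (μ : Measure X) (ν s r : ℝ) (u : X → E) : ℝ≥0∞ :=
  ∫⁻ x, gagliardoDensity μ ν s r u x ∂μ

/-- Ahlfors `ν`-regularity of a measure of diameter at most `D`, up to the scale `D` and with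
constants `a` and `b`. For `μ.restrict Q` this is regularity of `Q`. -/
structure IsAhlforsRegular (μ : Measure X) (ν : ℝ) (a b D : ℝ≥0∞) : Prop where
  ae_edist_le : ∀ᵐ x ∂μ, ∀ᵐ y ∂μ, edist x y ≤ D
  ae_le_measure_closedEBall : ∀ᵐ x ∂μ, ∀ t ≤ D, a * t ^ ν ≤ μ (closedEBall x t)
  ae_measure_closedEBall_le : ∀ᵐ x ∂μ, ∀ t ≤ D, μ (closedEBall x t) ≤ b * t ^ ν

lemma aemeasurable_gagliardoDensity [OpensMeasurableSpace X] [SecondCountableTopology X]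
    [SFinite μ] (hu : AEStronglyMeasurable u μ) :
    AEMeasurable (gagliardoDensity μ ν s r u) μ := by
  have hdiff : AEMeasurable (fun q : X × X => ‖u q.1 - u q.2‖ₑ) (μ.prod μ) :=
    (hu.comp_fst.sub hu.comp_snd).enorm
  have hker : Measurable fun q : X × X => edist q.1 q.2 ^ (-(ν + s * r)) := by fun_prop
  exact ((hdiff.pow_const r).mul hker.aemeasurable).lintegral_prod_right'

lemma setLIntegral_enorm_sub_rpow_le_gagliardoDensity {B : Set X} (hB : ∀ᵐ z ∂μ.restrict B,
    edist y z ≤ t) (ht₀ : t ≠ 0) (ht : t ≠ ∞) (he : 0 ≤ ν + s * r) :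
    ∫⁻ z in B, ‖u y - u z‖ₑ ^ r ∂μ ≤ t ^ (ν + s * r) * gagliardoDensity μ ν s r u y := by
  rw [gagliardoDensity, ← lintegral_const_mul' _ _ (ENNReal.rpow_ne_top_of_nonneg he ht)]
  refine (lintegral_mono_ae (hB.mono fun z hz => ?_)).trans (setLIntegral_le_lintegral B _)
  have hker : 1 ≤ t ^ (ν + s * r) * edist y z ^ (-(ν + s * r)) := by
    simpa only [ENNReal.one_rpow] using
      rpow_neg_le_mul_rpow_neg (d := 1) (by rwa [mul_one]) ht₀ ht he
  rw [mul_left_comm]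
  exact le_mul_of_one_le_right' hker

lemma integrable_of_gagliardoEnergy_ne_top [OpensMeasurableSpace X] [SecondCountableTopology X]
    [IsFiniteMeasure μ] (hu : AEStronglyMeasurable u μ)
    (hdiam : ∀ᵐ x ∂μ, ∀ᵐ y ∂μ, edist x y ≤ D) (hD₀ : D ≠ 0) (hD : D ≠ ∞) (hr : 1 ≤ r)
    (he : 0 ≤ ν + s * r) (hE : gagliardoEnergy μ ν s r u ≠ ∞) : Integrable u μ := by
  rcases eq_or_ne μ 0 with rfl | hμ
  · exact integrable_zero_measure
  have : NeBot (ae μ) := ae_neBot.2 hμ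
  have hr₀ : 0 < r := by linarith
  obtain ⟨x, hx, hxD⟩ :=
    ((ae_lt_top' (aemeasurable_gagliardoDensity hu) hE).and hdiam).exists
  have hLr : ∫⁻ y, ‖u x - u y‖ₑ ^ r ∂μ < ∞ := by
    have := setLIntegral_enorm_sub_rpow_le_gagliardoDensity (u := u) (B := univ)
      (by rwa [Measure.restrict_univ]) hD₀ hD he
    rw [Measure.restrict_univ] at this
    exact this.trans_lt (ENNReal.mul_lt_top (ENNReal.rpow_lt_top_of_nonneg he hD) hx)
  have hmem : MemLp (fun y => u x - u y) (ENNReal.ofReal r) μ := by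
    refine ⟨aestronglyMeasurable_const.sub hu, ?_⟩
    rw [eLpNorm_lt_top_iff_lintegral_rpow_enorm_lt_top (by simpa using hr₀) (by simp),
      ENNReal.toReal_ofReal hr₀.le]
    exact hLr
  have hint : Integrable (fun y => u x - u y) μ :=
    hmem.integrable (by simpa using hr)
  exact ((integrable_const (u x)).sub hint).congr (.of_forall fun y => sub_sub_cancel (u x) (u y))

lemma lintegral_mul_setLIntegral_gagliardoDensity_rpow_le [OpensMeasurableSpace X]
    [SecondCountableTopology X] [SFinite μ] (hu : AEStronglyMeasurable u μ) (hr : 1 ≤ r)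
    (hrp : r ≤ p) (ht₀ : t ≠ 0) (ht : t ≠ ∞)
    (hball : ∀ᵐ y ∂μ, μ (closedEBall y t) ≤ b * t ^ ν) (C : ℝ≥0∞) :
    (∫⁻ x, ((C * t ^ (s * r - ν) *
        ∫⁻ y in closedEBall x t, gagliardoDensity μ ν s r u y ∂μ) ^ r⁻¹) ^ p ∂μ) ^ p⁻¹ ≤
      C ^ r⁻¹ * b ^ p⁻¹ * gagliardoEnergy μ ν s r u ^ r⁻¹ * t ^ (s - ν * (r⁻¹ - p⁻¹)) := by
  have hr₀ : 0 < r := by linarith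
  have hp₀ : 0 < p := by linarith
  have hq : 0 ≤ r⁻¹ * p := by positivity
  have hG : AEMeasurable (gagliardoDensity μ ν s r u) μ := aemeasurable_gagliardoDensity hu
  have hexp : r⁻¹ * p * p⁻¹ = r⁻¹ := by field_simp
  have hq₁ : 1 ≤ r⁻¹ * p := by rwa [inv_mul_eq_div, one_le_div hr₀]
  calc (∫⁻ x, ((C * t ^ (s * r - ν) *
        ∫⁻ y in closedEBall x t, gagliardoDensity μ ν s r u y ∂μ) ^ r⁻¹) ^ p ∂μ) ^ p⁻¹
      = ((C * t ^ (s * r - ν)) ^ (r⁻¹ * p) * ∫⁻ x,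
          (∫⁻ y in closedEBall x t, gagliardoDensity μ ν s r u y ∂μ) ^ (r⁻¹ * p) ∂μ) ^ p⁻¹ := by
        simp only [← ENNReal.rpow_mul, ENNReal.mul_rpow_of_nonneg _ _ hq]
        rw [lintegral_const_mul''
          _ ((aemeasurable_setLIntegral_closedEBall hG t).pow_const _)]
    _ ≤ ((C * t ^ (s * r - ν)) ^ (r⁻¹ * p) *
          (b * t ^ ν * gagliardoEnergy μ ν s r u ^ (r⁻¹ * p))) ^ p⁻¹ := by
        gcongr
        exact lintegral_setLIntegral_closedEBall_rpow_le hG hq₁ hball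
    _ = C ^ r⁻¹ * b ^ p⁻¹ * gagliardoEnergy μ ν s r u ^ r⁻¹ *
          (t ^ ((s * r - ν) * r⁻¹) * t ^ (ν * p⁻¹)) := by
        simp only [ENNReal.mul_rpow_of_nonneg _ _ (inv_nonneg.2 hp₀.le), ← ENNReal.rpow_mul, hexp,
          ENNReal.mul_rpow_of_nonneg _ _ (inv_nonneg.2 hr₀.le)]
        ring
    _ = C ^ r⁻¹ * b ^ p⁻¹ * gagliardoEnergy μ ν s r u ^ r⁻¹ * t ^ (s - ν * (r⁻¹ - p⁻¹)) := by
        rw [← ENNReal.rpow_add _ _ ht₀ ht]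
        congr 2
        field_simp
        ring

variable [NormedSpace ℝ E]

/-- The average of `u` over the closed ball of radius `D * 2⁻ʲ` about `x`. -/
def dyadicAverage (μ : Measure X) (u : X → E) (D : ℝ≥0∞) (x : X) (j : ℕ) : E :=
  ⨍ y in closedEBall x (D * 2⁻¹ ^ j), u y ∂μ

lemma dyadicAverage_zero (hx : ∀ᵐ y ∂μ, edist x y ≤ D) :
    dyadicAverage μ u D x 0 = ⨍ y, u y ∂μ := by
  have hmem : ∀ᵐ y ∂μ, y ∈ closedEBall x D := by simpa only [mem_closedEBall'] using hx
  rw [dyadicAverage, pow_zero, mul_one, Measure.restrict_eq_self_of_ae_mem hmem]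

variable [CompleteSpace E] [OpensMeasurableSpace X] [IsFiniteMeasure μ]

lemma enorm_sub_setAverage_closedEBall_rpow_le (hu : Integrable u μ) (hr : 1 ≤ r)
    (he : 0 ≤ ν + s * r) (ha : a ≠ 0) (ht₀ : t ≠ 0) (ht : t ≠ ∞)
    (hball : a * t ^ ν ≤ μ (closedEBall x t)) (hy : y ∈ closedEBall x t) :
    ‖u y - ⨍ z in closedEBall x t, u z ∂μ‖ₑ ^ r ≤
      a⁻¹ * 2 ^ (ν + s * r) * t ^ (s * r) * gagliardoDensity μ ν s r u y := by
  have htν₀ : t ^ ν ≠ 0 := by simp [ENNReal.rpow_eq_zero_iff, ht₀, ht]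
  have htν : t ^ ν ≠ ∞ := by simp [ENNReal.rpow_eq_top_iff, ht₀, ht]
  have hdiam : ∀ᵐ z ∂μ.restrict (closedEBall x t), edist y z ≤ 2 * t :=
    (ae_restrict_mem (measurableSet_closedEBall x t)).mono fun z hz =>
      (edist_triangle_right y z x).trans (by rw [two_mul]; exact add_le_add hy hz)
  calc ‖u y - ⨍ z in closedEBall x t, u z ∂μ‖ₑ ^ r
      ≤ (a * t ^ ν)⁻¹ * ∫⁻ z in closedEBall x t, ‖u y - u z‖ₑ ^ r ∂μ :=
        enorm_sub_setAverage_rpow_le hu _ hr (mul_ne_zero ha htν₀) hball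
    _ ≤ (a * t ^ ν)⁻¹ * ((2 * t) ^ (ν + s * r) * gagliardoDensity μ ν s r u y) := by
        gcongr
        exact setLIntegral_enorm_sub_rpow_le_gagliardoDensity hdiam
          (mul_ne_zero two_ne_zero ht₀) (ENNReal.mul_ne_top ENNReal.ofNat_ne_top ht) he
    _ = a⁻¹ * 2 ^ (ν + s * r) * ((t ^ ν)⁻¹ * t ^ ν) * t ^ (s * r) *
          gagliardoDensity μ ν s r u y := by
        rw [ENNReal.mul_inv (.inr htν) (.inr htν₀), ENNReal.mul_rpow_of_nonneg _ _ he,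
          ENNReal.rpow_add _ _ ht₀ ht]
        ring
    _ = a⁻¹ * 2 ^ (ν + s * r) * t ^ (s * r) * gagliardoDensity μ ν s r u y := by
        rw [ENNReal.inv_mul_cancel htν₀ htν, mul_one]

lemma enorm_setAverage_closedEBall_sub_half_rpow_le (hu : Integrable u μ) (hr : 1 ≤ r)
    (he : 0 ≤ ν + s * r) (ha : a ≠ 0) (ht₀ : t ≠ 0) (ht : t ≠ ∞)
    (hball : a * t ^ ν ≤ μ (closedEBall x t))
    (hhalf : a * (t * 2⁻¹) ^ ν ≤ μ (closedEBall x (t * 2⁻¹))) :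
    ‖(⨍ z in closedEBall x t, u z ∂μ) - ⨍ z in closedEBall x (t * 2⁻¹), u z ∂μ‖ₑ ^ r ≤
      a⁻¹ ^ 2 * 2 ^ (2 * ν + s * r) * t ^ (s * r - ν) *
        ∫⁻ y in closedEBall x t, gagliardoDensity μ ν s r u y ∂μ := by
  have hm₀ : a * (t * 2⁻¹) ^ ν ≠ 0 :=
    mul_ne_zero ha (by simp [ENNReal.rpow_eq_zero_iff, ENNReal.mul_eq_top, ht₀, ht])
  have hC : a⁻¹ * 2 ^ (ν + s * r) * t ^ (s * r) ≠ ∞ :=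
    ENNReal.mul_ne_top (ENNReal.mul_ne_top (ENNReal.inv_ne_top.2 ha)
      (by simp [ENNReal.rpow_eq_top_iff])) (by simp [ENNReal.rpow_eq_top_iff, ht₀, ht])
  have hsub : closedEBall x (t * 2⁻¹) ⊆ closedEBall x t :=
    closedEBall_subset_closedEBall (mul_le_of_le_one_right' (by simp))
  calc ‖(⨍ z in closedEBall x t, u z ∂μ) - ⨍ z in closedEBall x (t * 2⁻¹), u z ∂μ‖ₑ ^ r
      ≤ (a * (t * 2⁻¹) ^ ν)⁻¹ * ∫⁻ y in closedEBall x (t * 2⁻¹),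
          ‖(⨍ z in closedEBall x t, u z ∂μ) - u y‖ₑ ^ r ∂μ :=
        enorm_sub_setAverage_rpow_le hu _ hr hm₀ hhalf
    _ ≤ (a * (t * 2⁻¹) ^ ν)⁻¹ * ∫⁻ y in closedEBall x t,
          ‖(⨍ z in closedEBall x t, u z ∂μ) - u y‖ₑ ^ r ∂μ := by
        gcongr
    _ ≤ (a * (t * 2⁻¹) ^ ν)⁻¹ * ∫⁻ y in closedEBall x t,
          a⁻¹ * 2 ^ (ν + s * r) * t ^ (s * r) * gagliardoDensity μ ν s r u y ∂μ := by
        gcongr (a * (t * 2⁻¹) ^ ν)⁻¹ * ?_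
        refine setLIntegral_mono' (measurableSet_closedEBall x t) fun y hy => ?_
        rw [enorm_sub_rev]
        exact enorm_sub_setAverage_closedEBall_rpow_le hu hr he ha ht₀ ht hball hy
    _ = a⁻¹ ^ 2 * 2 ^ (2 * ν + s * r) * t ^ (s * r - ν) *
          ∫⁻ y in closedEBall x t, gagliardoDensity μ ν s r u y ∂μ := by
        rw [lintegral_const_mul' _ _ hC, ← mul_assoc, inv_mul_half_rpow_mul ha ht₀ ht]

lemma tendsto_dyadicAverage (hu : Integrable u μ) (hν : 0 ≤ ν) (hs : 0 < s) (hr : 1 ≤ r)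
    (ha : a ≠ 0) (hD₀ : D ≠ 0) (hD : D ≠ ∞)
    (hball : ∀ t ≤ D, a * t ^ ν ≤ μ (closedEBall x t)) (hx : gagliardoDensity μ ν s r u x ≠ ∞) :
    Tendsto (dyadicAverage μ u D x) atTop (𝓝 (u x)) := by
  have hr₀ : 0 < r := by linarith
  have hC : a⁻¹ * 2 ^ (ν + s * r) ≠ ∞ :=
    ENNReal.mul_ne_top (ENNReal.inv_ne_top.2 ha) (by simp [ENNReal.rpow_eq_top_iff])
  have hbound (j : ℕ) : ‖u x - dyadicAverage μ u D x j‖ₑ ≤ (a⁻¹ * 2 ^ (ν + s * r) *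
      (D * 2⁻¹ ^ j) ^ (s * r) * gagliardoDensity μ ν s r u x) ^ r⁻¹ :=
    (ENNReal.le_rpow_inv_iff hr₀).2 <| enorm_sub_setAverage_closedEBall_rpow_le hu hr
      (by positivity) ha (mul_inv_two_pow_ne_zero hD₀ j)
      (ne_top_of_le_ne_top hD (mul_inv_two_pow_le D j)) (hball _ (mul_inv_two_pow_le D j))
      (mem_closedEBall_self)
  have hlim : Tendsto (fun j : ℕ => (a⁻¹ * 2 ^ (ν + s * r) *
      (D * 2⁻¹ ^ j) ^ (s * r) * gagliardoDensity μ ν s r u x) ^ r⁻¹) atTop (𝓝 0) := by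
    have hpow := (tendsto_mul_inv_two_pow hD).ennrpow_const (s * r)
    rw [ENNReal.zero_rpow_of_pos (by positivity)] at hpow
    have := (ENNReal.Tendsto.mul_const (ENNReal.Tendsto.const_mul hpow (.inr hC))
      (.inr hx)).ennrpow_const r⁻¹
    simpa [hr₀] using this
  refine tendsto_iff_edist_tendsto_0.2 (tendsto_of_tendsto_of_tendsto_of_le_of_le
    tendsto_const_nhds hlim (fun _ => zero_le) fun j => ?_)
  rw [edist_comm, edist_eq_enorm_sub]
  exact hbound j

lemma enorm_sub_average_le_tsum (hu : Integrable u μ) (hν : 0 ≤ ν) (hs : 0 < s) (hr : 1 ≤ r)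
    (ha : a ≠ 0) (hD₀ : D ≠ 0) (hD : D ≠ ∞)
    (hball : ∀ t ≤ D, a * t ^ ν ≤ μ (closedEBall x t)) (hdiam : ∀ᵐ y ∂μ, edist x y ≤ D)
    (hx : gagliardoDensity μ ν s r u x ≠ ∞) :
    ‖u x - ⨍ y, u y ∂μ‖ₑ ≤ ∑' j : ℕ, (a⁻¹ ^ 2 * 2 ^ (2 * ν + s * r) *
      (D * 2⁻¹ ^ j) ^ (s * r - ν) *
        ∫⁻ y in closedEBall x (D * 2⁻¹ ^ j), gagliardoDensity μ ν s r u y ∂μ) ^ r⁻¹ := by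
  rw [← dyadicAverage_zero hdiam, enorm_sub_rev, ← edist_eq_enorm_sub]
  refine edist_le_tsum_of_edist_le_of_tendsto₀ _ (fun j => ?_)
    (tendsto_dyadicAverage hu hν hs hr ha hD₀ hD hball hx)
  rw [edist_eq_enorm_sub, ENNReal.le_rpow_inv_iff (by linarith), dyadicAverage, dyadicAverage,
    pow_succ, ← mul_assoc]
  have hle := mul_inv_two_pow_le D j
  exact enorm_setAverage_closedEBall_sub_half_rpow_le hu hr (by positivity) ha
    (mul_inv_two_pow_ne_zero hD₀ j) (ne_top_of_le_ne_top hD hle) (hball _ hle)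
    (hball _ ((mul_le_of_le_one_right' (by simp)).trans hle))

/-- The constant produced by telescoping over dyadic balls: `a` and `b` are the regularity constants
of the measure, and the last factor sums the geometric series of ratio `2 ^ (-δ)` with
`δ = s - ν (1 / r - 1 / p)`. -/
def fractionalPoincareConst (ν s r p : ℝ) (a b : ℝ≥0∞) : ℝ≥0∞ :=
  (a⁻¹ ^ 2 * 2 ^ (2 * ν + s * r)) ^ r⁻¹ * b ^ p⁻¹ * (1 - 2⁻¹ ^ (s - ν * (r⁻¹ - p⁻¹)))⁻¹

lemma fractionalPoincareConst_ne_top (ha : a ≠ 0) (hb : b ≠ ∞) (hr : 0 ≤ r) (hp : 0 ≤ p)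
    (hδ : 0 < s - ν * (r⁻¹ - p⁻¹)) : fractionalPoincareConst ν s r p a b ≠ ∞ := by
  refine ENNReal.mul_ne_top (ENNReal.mul_ne_top ?_ ?_) (inv_one_sub_inv_two_rpow_ne_top hδ)
  · exact ENNReal.rpow_ne_top_of_nonneg (inv_nonneg.2 hr) <| ENNReal.mul_ne_top
      (ENNReal.pow_ne_top (ENNReal.inv_ne_top.2 ha)) (by simp [ENNReal.rpow_eq_top_iff])
  · exact ENNReal.rpow_ne_top_of_nonneg (inv_nonneg.2 hp) hb

theorem IsAhlforsRegular.lintegral_enorm_sub_average_rpow_le [SecondCountableTopology X]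
    (hμ : IsAhlforsRegular μ ν a b D) (ha : a ≠ 0) (hD₀ : D ≠ 0) (hD : D ≠ ∞) (hν : 0 ≤ ν)
    (hr : 1 ≤ r) (hrp : r ≤ p) (hδ : 0 < s - ν * (r⁻¹ - p⁻¹)) (hu : AEStronglyMeasurable u μ)
    (hI : gagliardoEnergy μ ν s r u ≠ ∞) :
    (∫⁻ x, ‖u x - ⨍ y, u y ∂μ‖ₑ ^ p ∂μ) ^ p⁻¹ ≤ fractionalPoincareConst ν s r p a b *
      gagliardoEnergy μ ν s r u ^ r⁻¹ * D ^ (s - ν * (r⁻¹ - p⁻¹)) := by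
  have hs : 0 < s := pos_of_sub_mul_inv_sub_inv_pos hν (by linarith) hrp hδ
  have hp : 0 ≤ p := by linarith
  have hG : AEMeasurable (gagliardoDensity μ ν s r u) μ := aemeasurable_gagliardoDensity hu
  have hint : Integrable u μ := integrable_of_gagliardoEnergy_ne_top hu hμ.ae_edist_le hD₀ hD hr
    (by positivity) hI
  have hball (j : ℕ) : ∀ᵐ y ∂μ, μ (closedEBall y (D * 2⁻¹ ^ j)) ≤ b * (D * 2⁻¹ ^ j) ^ ν :=
    hμ.ae_measure_closedEBall_le.mono fun y hy => hy _ (mul_inv_two_pow_le D j)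
  set C := a⁻¹ ^ 2 * 2 ^ (2 * ν + s * r)
  set g : ℕ → X → ℝ≥0∞ := fun j x => (C * (D * 2⁻¹ ^ j) ^ (s * r - ν) *
    ∫⁻ y in closedEBall x (D * 2⁻¹ ^ j), gagliardoDensity μ ν s r u y ∂μ) ^ r⁻¹
  have hptwise : ∀ᵐ x ∂μ, ‖u x - ⨍ y, u y ∂μ‖ₑ ≤ ∑' j, g j x := by
    filter_upwards [ae_lt_top' hG hI, hμ.ae_edist_le, hμ.ae_le_measure_closedEBall]
      with x hx hdiam hlower
    exact enorm_sub_average_le_tsum hint hν hs hr ha hD₀ hD hlower hdiam hx.ne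
  calc (∫⁻ x, ‖u x - ⨍ y, u y ∂μ‖ₑ ^ p ∂μ) ^ p⁻¹
      ≤ (∫⁻ x, (∑' j, g j x) ^ p ∂μ) ^ p⁻¹ := by
        refine ENNReal.rpow_le_rpow (lintegral_mono_ae ?_) (inv_nonneg.2 hp)
        exact hptwise.mono fun x hx => ENNReal.rpow_le_rpow hx hp
    _ ≤ ∑' j, (∫⁻ x, g j x ^ p ∂μ) ^ p⁻¹ := lintegral_Lp_tsum_le (fun j =>
        ((aemeasurable_setLIntegral_closedEBall hG _).const_mul _).pow_const _) (hr.trans hrp)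
    _ ≤ ∑' j, C ^ r⁻¹ * b ^ p⁻¹ * gagliardoEnergy μ ν s r u ^ r⁻¹ *
          (D * 2⁻¹ ^ j) ^ (s - ν * (r⁻¹ - p⁻¹)) := by
        gcongr with j
        exact lintegral_mul_setLIntegral_gagliardoDensity_rpow_le hu hr hrp
          (mul_inv_two_pow_ne_zero hD₀ j) (ne_top_of_le_ne_top hD (mul_inv_two_pow_le D j))
          (hball j) C
    _ = fractionalPoincareConst ν s r p a b * gagliardoEnergy μ ν s r u ^ r⁻¹ *
          D ^ (s - ν * (r⁻¹ - p⁻¹)) := by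
        rw [ENNReal.tsum_mul_left, tsum_mul_inv_two_pow_rpow D hδ.le, fractionalPoincareConst]
        ring

end FractionalSobolev

section Cube

lemma exists_closedBall_half_subset_inter {V : Type*} [SeminormedAddCommGroup V] [NormedSpace ℝ V]
    {q x : V} {R t : ℝ} (hR : 0 < R) (hx : x ∈ closedBall q R) (ht : 0 ≤ t) (htR : t ≤ 2 * R) :
    ∃ c, closedBall c (t / 2) ⊆ closedBall q R ∩ closedBall x t := by
  obtain ⟨l, hl₀, hl₁, hlR⟩ : ∃ l : ℝ, 0 ≤ l ∧ l ≤ 1 ∧ l * R = t / 2 :=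
    ⟨t / (2 * R), by positivity, (div_le_one (by positivity)).2 htR, by field_simp⟩
  have hdist : ‖q - x‖ ≤ R := by rwa [← dist_eq_norm, dist_comm]
  have hcx : dist (x + l • (q - x)) x ≤ t / 2 := by
    rw [dist_eq_norm, add_sub_cancel_left, norm_smul, Real.norm_of_nonneg hl₀, ← hlR]
    gcongr
  have hcq : dist (x + l • (q - x)) q ≤ R - t / 2 := by
    have hsub : x + l • (q - x) - q = (l - 1) • (q - x) := by module
    rw [dist_eq_norm, hsub, norm_smul, Real.norm_of_nonpos (by linarith), ← hlR]
    nlinarith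
  exact ⟨x + l • (q - x), subset_inter (closedBall_subset_closedBall' (by linarith))
    (closedBall_subset_closedBall' (by linarith))⟩

variable {n : ℕ} {xQ : Rn n} {R : ℝ}

lemma isAhlforsRegular_restrict_closedBall (hR : 0 < R) :
    IsAhlforsRegular (volume.restrict (closedBall xQ R)) n 1 (2 ^ n) (ENNReal.ofReal (2 * R)) where
  ae_edist_le := by
    filter_upwards [ae_restrict_mem measurableSet_closedBall] with x hx
    filter_upwards [ae_restrict_mem measurableSet_closedBall] with y hy
    rw [edist_dist]
    gcongr
    linarith [dist_triangle_right x y xQ, mem_closedBall.1 hx, mem_closedBall.1 hy]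
  ae_le_measure_closedEBall := by
    filter_upwards [ae_restrict_mem measurableSet_closedBall] with x hx t ht
    lift t to ℝ≥0 using ne_top_of_le_ne_top ENNReal.ofReal_ne_top ht
    have ht' : (t : ℝ) ≤ 2 * R := by
      simpa only [ENNReal.coe_toReal] using ENNReal.toReal_le_of_le_ofReal (by positivity) ht
    obtain ⟨c, hc⟩ := exists_closedBall_half_subset_inter hR hx t.coe_nonneg ht'
    calc (1 : ℝ≥0∞) * (t : ℝ≥0∞) ^ (n : ℝ) = volume (closedBall c ((t : ℝ) / 2)) := by
          rw [Real.volume_pi_closedBall _ (by positivity), one_mul, ENNReal.rpow_natCast,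
            mul_div_cancel₀ _ two_ne_zero, Fintype.card_fin, ENNReal.ofReal_pow t.coe_nonneg,
            ENNReal.ofReal_coe_nnreal]
      _ ≤ volume.restrict (closedBall xQ R) (closedEBall x t) := by
          rw [closedEBall_coe, Measure.restrict_apply measurableSet_closedBall, inter_comm]
          exact measure_mono hc
  ae_measure_closedEBall_le := by
    refine .of_forall fun x t ht => (Measure.restrict_apply_le _ _).trans_eq ?_
    lift t to ℝ≥0 using ne_top_of_le_ne_top ENNReal.ofReal_ne_top ht
    rw [closedEBall_coe, Real.volume_pi_closedBall _ t.coe_nonneg, Fintype.card_fin,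
      ENNReal.rpow_natCast, ← mul_pow, ENNReal.ofReal_pow (by positivity),
      ENNReal.ofReal_mul zero_le_two, ENNReal.ofReal_coe_nnreal, ENNReal.ofReal_ofNat]

lemma ofReal_euclDist_le (x y : Rn n) :
    ENNReal.ofReal (euclDist x y) ≤ (n : ℝ≥0∞) ^ (2⁻¹ : ℝ) * edist x y := by
  have heucl : euclDist x y = dist (WithLp.toLp 2 x) (WithLp.toLp 2 y) := by
    simp only [euclDist, EuclideanSpace.dist_eq, Real.dist_eq, sq_abs]
  rw [heucl, ← edist_dist]
  simpa [ENNReal.coe_rpow_of_nonneg] using (PiLp.lipschitzWith_toLp 2 fun _ : Fin n => ℝ) x y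

lemma ofReal_two_mul_rpow_eq_volume_closedBall_rpow (hn : n ≠ 0) (hR : 0 ≤ R) (e : ℝ) :
    ENNReal.ofReal (2 * R) ^ e = volume (closedBall xQ R) ^ (e / n) := by
  rw [Real.volume_pi_closedBall _ hR, Fintype.card_fin, ENNReal.ofReal_pow (by positivity),
    ← ENNReal.rpow_natCast, ← ENNReal.rpow_mul, mul_div_cancel₀ _ (by positivity)]

variable {E : Type*} [NormedAddCommGroup E] {ν s r p : ℝ} {u : Rn n → E}

/-- The variant of `gagliardoEnergy` on `ℝⁿ` with the Euclidean instead of the sup-norm distance in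
the kernel. -/
def euclGagliardoEnergy (μ : Measure (Rn n)) (ν s r : ℝ) (u : Rn n → E) : ℝ≥0∞ :=
  ∫⁻ x, ∫⁻ y, ‖u x - u y‖ₑ ^ r * ENNReal.ofReal (euclDist x y) ^ (-(ν + s * r)) ∂μ ∂μ

lemma gagliardoEnergy_le_euclGagliardoEnergy (hn : n ≠ 0) {μ : Measure (Rn n)}
    (he : 0 ≤ ν + s * r) :
    gagliardoEnergy μ ν s r u ≤
      ((n : ℝ≥0∞) ^ (2⁻¹ : ℝ)) ^ (ν + s * r) * euclGagliardoEnergy μ ν s r u := by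
  have hκ₀ : (n : ℝ≥0∞) ^ (2⁻¹ : ℝ) ≠ 0 := by simpa using hn
  have hκ : (n : ℝ≥0∞) ^ (2⁻¹ : ℝ) ≠ ∞ := by simp
  have hκe := ENNReal.rpow_ne_top_of_nonneg he hκ
  simp only [gagliardoEnergy, gagliardoDensity, euclGagliardoEnergy,
    ← lintegral_const_mul' _ _ hκe]
  refine lintegral_mono fun x => lintegral_mono fun y => ?_
  rw [mul_left_comm]
  gcongr
  exact rpow_neg_le_mul_rpow_neg (ofReal_euclDist_le x y) hκ₀ hκ he

variable [NormedSpace ℝ E] [CompleteSpace E]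

lemma lintegral_enorm_sub_average_closedBall_rpow_le_gagliardoEnergy (hn : n ≠ 0)
    (hR : 0 < R) (hr : 1 ≤ r) (hrp : r ≤ p) (hδ : 0 < s - n * (r⁻¹ - p⁻¹))
    (hu : AEStronglyMeasurable u (volume.restrict (closedBall xQ R)))
    (hI : gagliardoEnergy (volume.restrict (closedBall xQ R)) n s r u ≠ ∞) :
    ∫⁻ x in closedBall xQ R, ‖u x - ⨍ y in closedBall xQ R, u y‖ₑ ^ p ≤
      fractionalPoincareConst n s r p 1 (2 ^ n) ^ p *
        volume (closedBall xQ R) ^ (1 + p * s / n - p / r) *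
          gagliardoEnergy (volume.restrict (closedBall xQ R)) n s r u ^ (p / r) := by
  have hp₀ : 0 < p := by linarith
  have : IsFiniteMeasure (volume.restrict (closedBall xQ R)) :=
    isFiniteMeasure_restrict.2 measure_closedBall_lt_top.ne
  have hLp := (isAhlforsRegular_restrict_closedBall (xQ := xQ)
    hR).lintegral_enorm_sub_average_rpow_le one_ne_zero (by simpa using hR)
    ENNReal.ofReal_ne_top n.cast_nonneg hr hrp hδ hu hI
  have hexp : (s - n * (r⁻¹ - p⁻¹)) / n * p = 1 + p * s / n - p / r := by
    field_simp
    ring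
  refine ((ENNReal.rpow_inv_le_iff hp₀).1 hLp).trans_eq ?_
  rw [ofReal_two_mul_rpow_eq_volume_closedBall_rpow (xQ := xQ) hn hR.le]
  simp only [ENNReal.mul_rpow_of_nonneg _ _ hp₀.le, ← ENNReal.rpow_mul, hexp, ← div_eq_inv_mul]
  ring

lemma lintegral_enorm_sub_average_closedBall_rpow_le_euclGagliardoEnergy (hn : n ≠ 0)
    (hR : 0 < R) (hr : 1 ≤ r) (hrp : r ≤ p) (hδ : 0 < s - n * (r⁻¹ - p⁻¹))
    (hu : AEStronglyMeasurable u (volume.restrict (closedBall xQ R))) {C : ℝ≥0∞} (hC₀ : C ≠ 0)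
    (hC : fractionalPoincareConst n s r p 1 (2 ^ n) ^ p *
      (((n : ℝ≥0∞) ^ (2⁻¹ : ℝ)) ^ (n + s * r)) ^ (p / r) ≤ C) :
    ∫⁻ x in closedBall xQ R, ‖u x - ⨍ y in closedBall xQ R, u y‖ₑ ^ p ≤
      C * volume (closedBall xQ R) ^ (1 + p * s / n - p / r) *
        euclGagliardoEnergy (volume.restrict (closedBall xQ R)) n s r u ^ (p / r) := by
  have hr₀ : 0 < r := by linarith
  have hpr : 0 < p / r := div_pos (by linarith) hr₀
  have hs : 0 < s := pos_of_sub_mul_inv_sub_inv_pos n.cast_nonneg hr₀ hrp hδ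
  have he : 0 ≤ n + s * r := by positivity
  set J := euclGagliardoEnergy (volume.restrict (closedBall xQ R)) n s r u
  set L := ((n : ℝ≥0∞) ^ (2⁻¹ : ℝ)) ^ (n + s * r)
  set V := volume (closedBall xQ R)
  rcases eq_or_ne J ∞ with hJ | hJ
  · have hV : V ^ (1 + p * s / n - p / r) ≠ 0 := by
      simp [ENNReal.rpow_eq_zero_iff, V, measure_closedBall_lt_top.ne,
        (measure_closedBall_pos volume xQ hR).ne']
    rw [hJ, ENNReal.top_rpow_of_pos hpr, ENNReal.mul_top (mul_ne_zero hC₀ hV)]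
    exact le_top
  have hL : L ≠ ∞ := ENNReal.rpow_ne_top_of_nonneg he (by simp)
  have hIJ : gagliardoEnergy (volume.restrict (closedBall xQ R)) n s r u ≤ L * J :=
    gagliardoEnergy_le_euclGagliardoEnergy hn he
  calc ∫⁻ x in closedBall xQ R, ‖u x - ⨍ y in closedBall xQ R, u y‖ₑ ^ p
      ≤ fractionalPoincareConst n s r p 1 (2 ^ n) ^ p * V ^ (1 + p * s / n - p / r) *
          gagliardoEnergy (volume.restrict (closedBall xQ R)) n s r u ^ (p / r) :=
        lintegral_enorm_sub_average_closedBall_rpow_le_gagliardoEnergy hn hR hr hrp hδ hu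
          (ne_top_of_le_ne_top (ENNReal.mul_ne_top hL hJ) hIJ)
    _ ≤ fractionalPoincareConst n s r p 1 (2 ^ n) ^ p * V ^ (1 + p * s / n - p / r) *
          (L * J) ^ (p / r) := by
        gcongr
    _ = fractionalPoincareConst n s r p 1 (2 ^ n) ^ p * L ^ (p / r) *
          V ^ (1 + p * s / n - p / r) * J ^ (p / r) := by
        rw [ENNReal.mul_rpow_of_nonneg _ _ hpr.le]
        ring
    _ ≤ C * V ^ (1 + p * s / n - p / r) * J ^ (p / r) := by gcongr

end Cube

/-- If `u` is not integrable on the cube, its average is the junk value `0`, but then the double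
integral is `∞`. -/
theorem fractional_sobolev_poincare_general {E : Type*} [NormedAddCommGroup E] [NormedSpace ℝ E]
    [CompleteSpace E] {n : ℕ} (hn : n ≠ 0) {p r s : ℝ} (hr : 1 ≤ r) (hrp : r ≤ p)
    (hδ : 1 / r - 1 / p < s / n) :
    ∃ c > 0, ∀ (xQ : Rn n) (rQ : ℝ), 0 < rQ → ∀ u : Rn n → E,
      AEStronglyMeasurable u (volume.restrict (closedBall xQ rQ)) →
      ∫⁻ x in closedBall xQ rQ, ‖u x - ⨍ y in closedBall xQ rQ, u y‖ₑ ^ p ≤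
        ENNReal.ofReal c * volume (closedBall xQ rQ) ^ (1 + p * s / n - p / r) *
          (∫⁻ x in closedBall xQ rQ, ∫⁻ y in closedBall xQ rQ,
            ‖u x - u y‖ₑ ^ r * ENNReal.ofReal (euclDist x y) ^ (-(n + s * r))) ^ (p / r) := by
  have hr₀ : 0 < r := by linarith
  have hp₀ : 0 < p := by linarith
  have hδ' : 0 < s - n * (r⁻¹ - p⁻¹) := by
    rw [lt_div_iff₀ (by positivity), one_div, one_div] at hδ
    linarith
  have hs : 0 < s := pos_of_sub_mul_inv_sub_inv_pos n.cast_nonneg hr₀ hrp hδ'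
  set C := fractionalPoincareConst n s r p 1 (2 ^ n) ^ p *
    (((n : ℝ≥0∞) ^ (2⁻¹ : ℝ)) ^ (n + s * r)) ^ (p / r)
  have hC : C ≠ ∞ := by
    refine ENNReal.mul_ne_top (ENNReal.rpow_ne_top_of_nonneg hp₀.le ?_)
      (ENNReal.rpow_ne_top_of_nonneg (by positivity)
        (ENNReal.rpow_ne_top_of_nonneg (by positivity) (by simp)))
    exact fractionalPoincareConst_ne_top one_ne_zero (by simp) hr₀.le hp₀.le hδ'
  have hC_le : C ≤ ENNReal.ofReal (C.toReal + 1) :=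
    (ENNReal.le_ofReal_iff_toReal_le hC (by positivity)).2 (by linarith)
  exact ⟨C.toReal + 1, by positivity, fun xQ rQ hrQ u hu =>
    lintegral_enorm_sub_average_closedBall_rpow_le_euclGagliardoEnergy hn hrQ hr hrp hδ' hu
      (ENNReal.ofReal_pos.2 (by positivity)).ne' hC_le⟩

/-- **Fractional Sobolev–Poincaré inequality on cubes** (Lemma 3.4). Let `n ≥ 2`,
`p, r ∈ [1,∞)` and `s ∈ (0,1)` satisfy `0 ≤ 1/r − 1/p < s/n`. Then there is `c > 0`,
independent of the cube `Q` and of `u ∈ L^r(Q)`, such that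
`∫_Q |u − u_Q|^p ≤ c |Q|^{1+ps/n−p/r} (∫_Q∫_Q |u(x)−u(y)|^r/|x−y|^{n+sr} dy dx)^{p/r}`
as an inequality in `[0,∞]` (Euclidean distance in the kernel). -/
theorem fractional_sobolev_poincare (n : ℕ) (hn : 2 ≤ n) (p r s : ℝ)
    (hp : 1 ≤ p) (hr : 1 ≤ r) (hs0 : 0 < s) (hs1 : s < 1)
    (h1 : 0 ≤ 1 / r - 1 / p) (h2 : 1 / r - 1 / p < s / n) :
    ∃ c > 0, ∀ (xQ : Rn n) (rQ : ℝ), 0 < rQ → ∀ u : Rn n → ℝ, Measurable u →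
      (∫⁻ y in closedBall xQ rQ, ENNReal.ofReal |u y| ^ r) < ⊤ →
      (∫⁻ x in closedBall xQ rQ,
          ENNReal.ofReal |u x - ⨍ y in closedBall xQ rQ, u y| ^ p)
        ≤ ENNReal.ofReal c *
            volume (closedBall xQ rQ) ^ (1 + p * s / n - p / r) *
            (∫⁻ x in closedBall xQ rQ, ∫⁻ y in closedBall xQ rQ,
                ENNReal.ofReal |u x - u y| ^ r *
                  ENNReal.ofReal (euclDist x y) ^ (-((n:ℝ) + s * r))) ^ (p / r) := by
  obtain ⟨c, hc, h⟩ := fractional_sobolev_poincare_general (E := ℝ) (by omega : n ≠ 0) hr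
    ((one_div_le_one_div (by linarith) (by linarith)).1 (by linarith)) h2
  exact ⟨c, hc, fun xQ rQ hrQ u hu _ => by
    simpa only [Real.enorm_eq_ofReal_abs] using h xQ rQ hrQ u hu.aestronglyMeasurable⟩
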